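/- Let c > 0 and a, b, β ∈ ℝ with β > 0. If ω = (x⃗; y⃗) ∈ Ω is a maximum point of F(x⃗;y⃗) = ∑_{i=1}^r (−x_i log x_i − y_i log y_i + (β/2)(a x_i² + b y_i² + 2c x_i y_i)), with x₁ ≥ ⋯ ≥ x_r, then all coordinates x_j and y_j are strictly positive. -/

import Mathlib

/-- The free-energy functional F of the two-block interchange model. -/
noncomputable def Fab (r : ℕ) (a b c β : ℝ) (x y : Fin r → ℝ) : ℝ :=
  ∑ i, (-(x i * Real.log (x i)) - y i * Real.log (y i) +
    β / 2 * (a * x i ^ 2 + b * y i ^ 2 + 2 * c * x i * y i))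

/-!
Suppose `x j = 0` at a maximizer. The total mass is positive, so `0 < x k` for some `k`; move a
small mass `t` from `k` to `j`. The entropy term at `j` gains `-t log t`, whereas the entropy term
at `k` and the interaction change only by `O(t)`. Since `t = o(-t log t)` as `t → 0⁺`, the move
increases the functional, a contradiction.
-/

open Asymptotics Filter Real Topology

theorem isLittleO_id_negMulLog_nhdsGT_zero : id =o[𝓝[>] 0] negMulLog := by
  have h_log : (fun _ ↦ 1 : ℝ → ℝ) =o[𝓝[>] 0] fun t ↦ -log t :=
    isLittleO_one_left_iff ℝ |>.2 <|
      tendsto_norm_atTop_atTop.comp (tendsto_neg_atBot_atTop.comp tendsto_log_nhdsGT_zero)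
  simpa [negMulLog_def, Function.id_def] using
    (isBigO_refl (id : ℝ → ℝ) (𝓝[>] 0)).mul_isLittleO h_log

theorem eventually_pos_negMulLog_add {g : ℝ → ℝ} (hg : g =O[𝓝[>] 0] id) :
    ∀ᶠ t in 𝓝[>] 0, 0 < negMulLog t + g t := by
  have h_little : g =o[𝓝[>] 0] negMulLog := hg.trans_isLittleO isLittleO_id_negMulLog_nhdsGT_zero
  filter_upwards [h_little.bound (c := 1 / 2) (by norm_num),
    Ioo_mem_nhdsGT (zero_lt_one' ℝ)] with t hgt ⟨ht0, ht1⟩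
  have h_pos : 0 < negMulLog t := by
    simpa [negMulLog] using mul_neg_of_pos_of_neg ht0 (log_neg ht0 ht1)
  rw [norm_eq_abs, norm_of_nonneg h_pos.le] at hgt
  linarith [neg_abs_le (g t)]

theorem isBigO_negMulLog_sub_sub {u : ℝ} (hu : u ≠ 0) :
    (fun t ↦ negMulLog (u - t) - negMulLog u) =O[𝓝 0] id := by
  have h_diff : DifferentiableAt ℝ (fun t ↦ negMulLog (u - t)) 0 := by
    fun_prop (disch := simpa)
  simpa [Function.id_def] using h_diff.isBigO_sub

/-- The simplex of nonnegative vectors of total mass `s`; the paper's `Ω` is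
`massSimplex (Fin r) ρ ×ˢ massSimplex (Fin r) (1 - ρ)`. -/
def massSimplex (ι : Type*) [Fintype ι] (s : ℝ) : Set (ι → ℝ) :=
  {x | (∀ i, 0 ≤ x i) ∧ ∑ i, x i = s}

/-- The Shannon entropy `-∑ x i log (x i)`, here for vectors of arbitrary total mass. -/
noncomputable def shannonEntropy {ι : Type*} [Fintype ι] (x : ι → ℝ) : ℝ :=
  ∑ i, negMulLog (x i)

/-- The perturbation of `x` that moves the mass `t` from coordinate `k` to coordinate `j`. -/
def massTransfer {ι : Type*} [DecidableEq ι] (x : ι → ℝ) (j k : ι) (t : ℝ) : ι → ℝ :=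
  x + t • (Pi.single j 1 - Pi.single k 1)

section OneBlock

variable {ι : Type*} [Fintype ι] {s : ℝ} {x : ι → ℝ} {j k : ι}

theorem exists_pos_of_mem_massSimplex (hs : 0 < s) (hx : x ∈ massSimplex ι s) : ∃ k, 0 < x k := by
  simpa using (Finset.sum_pos_iff_of_nonneg fun i _ ↦ hx.1 i).1 (hs.trans_eq hx.2.symm)

section Transfer

variable [DecidableEq ι]

theorem massTransfer_mem_massSimplex {t : ℝ} (hx : x ∈ massSimplex ι s) (ht : 0 ≤ t)
    (htk : t ≤ x k) : massTransfer x j k t ∈ massSimplex ι s := by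
  refine ⟨fun i ↦ ?_, ?_⟩
  · have hi := hx.1 i
    simp only [massTransfer, Pi.add_apply, Pi.smul_apply, Pi.sub_apply, Pi.single_apply,
      smul_eq_mul]
    split_ifs <;> subst_vars <;> linarith
  · simp [massTransfer, Finset.sum_add_distrib, ← Finset.mul_sum, hx.2]

theorem tendsto_massTransfer (hx : x ∈ massSimplex ι s) (hk : 0 < x k) :
    Tendsto (massTransfer x j k) (𝓝[>] 0) (𝓝[massSimplex ι s] x) := by
  refine tendsto_nhdsWithin_iff.2 ⟨?_, ?_⟩
  · have h_cont : Continuous (massTransfer x j k) := by unfold massTransfer; fun_prop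
    exact (h_cont.tendsto' 0 x (by simp [massTransfer])).mono_left nhdsWithin_le_nhds
  · filter_upwards [Ioc_mem_nhdsGT hk] with t ht
    exact massTransfer_mem_massSimplex hx ht.1.le ht.2

theorem isBigO_massTransfer_sub (x : ι → ℝ) (j k : ι) (l : Filter ℝ) :
    (massTransfer x j k · - x) =O[l] id :=
  .of_bound ‖(Pi.single j 1 - Pi.single k 1 : ι → ℝ)‖ <| .of_forall fun t ↦ by
    simp [massTransfer, norm_smul, mul_comm]

theorem shannonEntropy_massTransfer_sub (hjk : j ≠ k) (t : ℝ) :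
    shannonEntropy (massTransfer x j k t) - shannonEntropy x =
      (negMulLog (x j + t) - negMulLog (x j)) + (negMulLog (x k - t) - negMulLog (x k)) := by
  rw [shannonEntropy, shannonEntropy, ← Finset.sum_sub_distrib, Fintype.sum_eq_add j k hjk]
  · simp [massTransfer, hjk, hjk.symm, sub_eq_add_neg]
  · rintro i ⟨hij, hik⟩
    simp [massTransfer, hij, hik]

end Transfer

theorem pos_of_isLocalMaxOn_shannonEntropy_add {V : (ι → ℝ) → ℝ} (hs : 0 < s)
    (hx : x ∈ massSimplex ι s) (hV : (V · - V x) =O[𝓝[massSimplex ι s] x] (· - x))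
    (hmax : IsLocalMaxOn (fun z ↦ shannonEntropy z + V z) (massSimplex ι s) x) (j : ι) :
    0 < x j := by
  classical
  refine (hx.1 j).lt_of_ne' fun hj ↦ ?_
  obtain ⟨k, hk⟩ := exists_pos_of_mem_massSimplex hs hx
  have hjk : j ≠ k := by rintro rfl; exact hk.ne' hj
  have h_path := tendsto_massTransfer (j := j) hx hk
  have h_interaction : (fun t ↦ V (massTransfer x j k t) - V x) =O[𝓝[>] 0] id :=
    (hV.comp_tendsto h_path).trans (isBigO_massTransfer_sub x j k _)
  have h_donor : (fun t ↦ negMulLog (x k - t) - negMulLog (x k)) =O[𝓝[>] 0] id :=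
    (isBigO_negMulLog_sub_sub hk.ne').mono nhdsWithin_le_nhds
  have h_gain := eventually_pos_negMulLog_add (h_donor.add h_interaction)
  obtain ⟨t, h_pos, h_le⟩ := (h_gain.and (h_path.eventually hmax)).exists
  have h_entropy := shannonEntropy_massTransfer_sub (x := x) hjk t
  simp only [hj, zero_add, negMulLog_zero, sub_zero] at h_entropy
  linarith

end OneBlock

theorem maximizer_strictly_positive_general {ι κ : Type*} [Fintype ι] [Fintype κ] {s t : ℝ}
    (hs : 0 < s) (ht : 0 < t) {V : (ι → ℝ) × (κ → ℝ) → ℝ} {x : ι → ℝ} {y : κ → ℝ}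
    (hx : x ∈ massSimplex ι s) (hy : y ∈ massSimplex κ t)
    (hV : (V · - V (x, y)) =O[𝓝[massSimplex ι s ×ˢ massSimplex κ t] (x, y)] (· - (x, y)))
    (hmax : IsLocalMaxOn (fun p ↦ shannonEntropy p.1 + shannonEntropy p.2 + V p)
      (massSimplex ι s ×ˢ massSimplex κ t) (x, y)) :
    (∀ i, 0 < x i) ∧ ∀ j, 0 < y j := by
  have h_left : Tendsto (fun z ↦ (z, y)) (𝓝[massSimplex ι s] x)
      (𝓝[massSimplex ι s ×ˢ massSimplex κ t] (x, y)) :=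
    (Continuous.prodMk_left y).continuousWithinAt.tendsto_nhdsWithin fun _ hz ↦ ⟨hz, hy⟩
  have h_right : Tendsto (fun z ↦ (x, z)) (𝓝[massSimplex κ t] y)
      (𝓝[massSimplex ι s ×ˢ massSimplex κ t] (x, y)) :=
    (Continuous.prodMk_right x).continuousWithinAt.tendsto_nhdsWithin fun _ hz ↦ ⟨hx, hz⟩
  constructor
  · refine pos_of_isLocalMaxOn_shannonEntropy_add (V := fun z ↦ V (z, y)) hs hx ?_ ?_
    · exact (hV.comp_tendsto h_left).trans (isBigO_of_le _ fun z ↦ by simp)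
    · filter_upwards [h_left.eventually hmax] with z hz
      linarith
  · refine pos_of_isLocalMaxOn_shannonEntropy_add (V := fun z ↦ V (x, z)) ht hy ?_ ?_
    · exact (hV.comp_tendsto h_right).trans (isBigO_of_le _ fun z ↦ by simp)
    · filter_upwards [h_right.eventually hmax] with z hz
      linarith

/-- The quadratic interaction part of `Fab`, as a function of the pair of blocks. -/
noncomputable def interactionEnergy {ι : Type*} [Fintype ι] (a b c β : ℝ)
    (p : (ι → ℝ) × (ι → ℝ)) : ℝ :=
  ∑ i, β / 2 * (a * p.1 i ^ 2 + b * p.2 i ^ 2 + 2 * c * p.1 i * p.2 i)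

theorem differentiable_interactionEnergy {ι : Type*} [Fintype ι] (a b c β : ℝ) :
    Differentiable ℝ (interactionEnergy (ι := ι) a b c β) := by
  unfold interactionEnergy
  fun_prop

theorem Fab_eq_shannonEntropy_add (r : ℕ) (a b c β : ℝ) (x y : Fin r → ℝ) :
    Fab r a b c β x y = shannonEntropy x + shannonEntropy y + interactionEnergy a b c β (x, y) := by
  simp [Fab, shannonEntropy, interactionEnergy, negMulLog, Finset.sum_add_distrib, sub_eq_add_neg]

theorem maximizer_strictly_positive (r : ℕ) (hr : 2 ≤ r) (ρ a b c β : ℝ)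
    (hρ0 : 0 < ρ) (hρ1 : ρ < 1) (hc : 0 < c) (hβ : 0 < β)
    (x y : Fin r → ℝ) (hx0 : ∀ i, 0 ≤ x i) (hy0 : ∀ i, 0 ≤ y i)
    (hxs : ∑ i, x i = ρ) (hys : ∑ i, y i = 1 - ρ)
    (hxdec : Antitone x)
    (hmax : ∀ x' y' : Fin r → ℝ, (∀ i, 0 ≤ x' i) → (∀ i, 0 ≤ y' i) →
      ∑ i, x' i = ρ → ∑ i, y' i = 1 - ρ → Fab r a b c β x' y' ≤ Fab r a b c β x y) :
    ∀ j, 0 < x j ∧ 0 < y j := by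
  simp only [Fab_eq_shannonEntropy_add] at hmax
  exact forall_and.2 <| maximizer_strictly_positive_general hρ0 (sub_pos.2 hρ1)
    ⟨hx0, hxs⟩ ⟨hy0, hys⟩
    ((differentiable_interactionEnergy a b c β _).isBigO_sub.mono nhdsWithin_le_nhds)
    (IsMaxOn.localize fun p hp ↦ hmax p.1 p.2 hp.1.1 hp.2.1 hp.1.2 hp.2.2)
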